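/- arXiv:2507.03309 — 2 statements merged into one kernel-verified Lean document; each statement's English description precedes it below -/
import Mathlib

section
/- In the poset of partitions — nonincreasing functions λ : ℤ_{>0} → ℕ ∪ {∞}, ordered by λ ⊆ μ iff λ_i ≤ μ_i for all i — every set of pairwise incomparable elements (antichain) is finite. -/
theorem partition_eventually_const (f : ℕ+ → ℕ∞) :
    ∃ N : ℕ+, ∀ i, f N ≤ f i := by
  have hne : (Set.range f).Nonempty := ⟨f 1, 1, rfl⟩
  obtain ⟨N, hN⟩ := WellFounded.min_mem (wellFounded_lt (α := ℕ∞)) (Set.range f) hne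
  refine ⟨N, fun i => ?_⟩
  rw [hN]
  exact not_lt.mp (WellFounded.not_lt_min (wellFounded_lt (α := ℕ∞)) (Set.range f) ⟨i, rfl⟩)

/-- The list of the first `N` parts. -/
def partitionList (f : ℕ+ → ℕ∞) (N : ℕ) : List ℕ∞ :=
  (List.range N).map (fun k => f k.succPNat)

theorem partitionList_le {f g : ℕ+ → ℕ∞} (hg : Antitone g) {M N : ℕ}
    (h : List.SublistForall₂ (· ≤ ·) (partitionList f M) (partitionList g N))
    (k : ℕ) (hk : k < M) : f k.succPNat ≤ g k.succPNat := by
  obtain ⟨l, h1, h2⟩ := List.sublistForall₂_iff.mp h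
  obtain ⟨φ, hφ⟩ := List.sublist_iff_exists_orderEmbedding_getElem?_eq.mp h2
  have hlen := h1.length_eq
  have hkM : k < (partitionList f M).length := by simpa [partitionList] using hk
  have hkl : k < l.length := hlen ▸ hkM
  have hle := h1.get hkM hkl
  have he := hφ k
  rw [List.getElem?_eq_getElem hkl] at he
  obtain ⟨hb, he⟩ := List.getElem?_eq_some_iff.mp he.symm
  simp only [List.get_eq_getElem] at hle
  rw [← he] at hle
  simp only [partitionList, List.getElem_map, List.getElem_range] at hle
  refine hle.trans (hg ?_)
  have : k ≤ φ k := φ.strictMono.le_apply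
  exact Nat.succPNat_le_succPNat.mpr this

theorem partition_wqo :
    WellQuasiOrdered (fun a b : {f : ℕ+ → ℕ∞ // Antitone f} => ∀ i, a.1 i ≤ b.1 i) := by
  have hu : (Set.univ : Set ℕ∞).PartiallyWellOrderedOn (· ≤ ·) :=
    Set.IsPWO.of_linearOrder _
  have hl := hu.partiallyWellOrderedOn_sublistForall₂ (· ≤ ·)
  haveI : IsPreorder (List ℕ∞) (List.SublistForall₂ (fun x y : ℕ∞ => x ≤ y)) := {}
  have hp := hl.prod hu
  choose N hN using partition_eventually_const
  intro u
  obtain ⟨m, n, hmn, h1, h2⟩ := hp.exists_lt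
    (f := fun n => (partitionList (u n).1 (N (u n).1), (u n).1 (N (u n).1))) (by simp)
  refine ⟨m, n, hmn, fun i => ?_⟩
  by_cases hi : (i : ℕ) ≤ N (u m).1
  · have := partitionList_le (u n).2 h1 i.natPred (by
      have := PNat.natPred_add_one i
      omega)
    simpa using this
  · exact ((u m).2 (PNat.coe_le_coe _ _ |>.mp (not_le.mp hi).le)).trans (h2.trans (hN _ _))

/-- In the poset of partitions (nonincreasing functions `ℤ_{>0} → ℕ ∪ {∞}`,
ordered by pointwise `≤`), every set of pairwise incomparable elements is finite. -/
theorem antichain_of_partitions_finite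
    (S : Set {f : ℕ+ → ℕ∞ // Antitone f})
    (h : ∀ a ∈ S, ∀ b ∈ S, a ≠ b →
      ¬(∀ i : ℕ+, a.1 i ≤ b.1 i) ∧ ¬(∀ i : ℕ+, b.1 i ≤ a.1 i)) :
    S.Finite :=
  IsAntichain.finite_of_wellQuasiOrdered (fun a ha b hb hab => (h a ha b hb hab).1)
    partition_wqo
end

section
/- Let p be a prime and let M be a (p−1) × (p−1) matrix over ℤ, with rows and columns indexed by 1, …, p−1, satisfying: M_{ij} = 2^{i−1}·j whenever i + j ≤ p, and M_{ij} = 2^{i−1}·j − p whenever i + j = p + 1 (the entries with i + j > p + 1 are arbitrary). Then det M = (−1)^{(p−1)(p−2)/2} · p^{p−2}; in particular det M ≠ 0. -/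
theorem antitri_det (c : ℤ) (m : ℕ) (A : Matrix (Fin m) (Fin m) ℤ)
    (h0 : ∀ i j : Fin m, (i : ℕ) + j + 1 < m → A i j = 0)
    (h1 : ∀ i j : Fin m, (i : ℕ) + j + 1 = m → A i j = -c) :
    A.det = (-1) ^ ((m + 1) * m / 2) * c ^ m := by
  induction m with
  | zero => simp
  | succ m ih =>
    rw [Matrix.det_succ_row_zero, Fin.sum_univ_castSucc, Finset.sum_eq_zero, zero_add,
      ih, h1 0 (Fin.last m) (by simp)]
    · have e : (m + 1 + 1) * (m + 1) / 2 = (m + 1) * m / 2 + (m + 1) := by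
        rw [show (m + 1 + 1) * (m + 1) = (m + 1) * m + (m + 1) * 2 by ring,
          Nat.add_mul_div_right _ _ (by norm_num)]
      rw [e, Fin.val_last]
      ring
    · intro i j h
      simp only [Matrix.submatrix_apply, Fin.succAbove_last]
      exact h0 _ _ (by simp; omega)
    · intro i j h
      simp only [Matrix.submatrix_apply, Fin.succAbove_last]
      exact h1 _ _ (by simp; omega)
    · intro j _
      rw [h0 0 j.castSucc (by simp)]
      simp

theorem det_aux (p : ℤ) (m : ℕ) (M : Matrix (Fin (m + 1)) (Fin (m + 1)) ℤ)
    (h1 : ∀ i j : Fin (m + 1), (i : ℕ) + 1 + ((j : ℕ) + 1) ≤ m + 2 →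
      M i j = 2 ^ (i : ℕ) * ((j : ℕ) + 1))
    (h2 : ∀ i j : Fin (m + 1), (i : ℕ) + 1 + ((j : ℕ) + 1) = m + 2 + 1 →
      M i j = 2 ^ (i : ℕ) * ((j : ℕ) + 1) - p) :
    M.det = (-1) ^ ((m + 1) * m / 2) * p ^ m := by
  let c : Fin (m + 1) → ℤ := fun i => if i = 0 then 0 else 2 ^ (i : ℕ)
  let B : Matrix (Fin (m + 1)) (Fin (m + 1)) ℤ := fun i j => M i j - c i * M 0 j
  have hrow : ∀ j : Fin (m + 1), M 0 j = (j : ℕ) + 1 := by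
    intro j
    rw [h1 0 j (by simp; omega)]
    simp
  have hdet : M.det = B.det :=
    Matrix.det_eq_of_forall_row_eq_smul_add_const c 0 (by simp [c])
      (fun i j => by simp [B, c])
  have hB : ∀ (i : Fin m) (j : Fin (m + 1)),
      B i.succ j = M i.succ j - 2 ^ ((i : ℕ) + 1) * ((j : ℕ) + 1) := by
    intro i j
    simp [B, c, hrow]
  rw [hdet, Matrix.det_succ_column_zero, Fin.sum_univ_succ, Finset.sum_eq_zero,
    antitri_det p m]
  · simp [B, c, hrow]
  · intro i j h
    simp only [Matrix.submatrix_apply, Fin.succAbove_zero]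
    rw [hB, h1 _ _ (by simp; omega)]
    simp
  · intro i j h
    simp only [Matrix.submatrix_apply, Fin.succAbove_zero]
    rw [hB, h2 _ _ (by simp; omega)]
    simp
  · intro i _
    rw [hB, h1 _ _ (by simp)]
    simp


/-- Let `p` be prime and `M` a `(p-1) × (p-1)` integer matrix (rows and columns
indexed by `1, ..., p-1`) with `M i j = 2^(i-1) * j` when `i + j ≤ p` and
`M i j = 2^(i-1) * j - p` when `i + j = p + 1`.  Then
`det M = (-1)^((p-1)(p-2)/2) * p^(p-2) ≠ 0`. -/
theorem det_of_matrix (p : ℕ) (hp : p.Prime) (M : Matrix (Fin (p - 1)) (Fin (p - 1)) ℤ)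
    (h1 : ∀ i j : Fin (p - 1), (i : ℕ) + 1 + ((j : ℕ) + 1) ≤ p →
      M i j = 2 ^ (i : ℕ) * ((j : ℕ) + 1))
    (h2 : ∀ i j : Fin (p - 1), (i : ℕ) + 1 + ((j : ℕ) + 1) = p + 1 →
      M i j = 2 ^ (i : ℕ) * ((j : ℕ) + 1) - p) :
    M.det = (-1) ^ ((p - 1) * (p - 2) / 2) * (p : ℤ) ^ (p - 2) ∧ M.det ≠ 0 := by
  obtain ⟨m, rfl⟩ : ∃ m, p = m + 2 := ⟨p - 2, by have := hp.two_le; omega⟩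
  have h := det_aux ((m + 2 : ℕ) : ℤ) m M h1 h2
  have h' : M.det = (-1) ^ ((m + 2 - 1) * (m + 2 - 2) / 2) * ((m + 2 : ℕ) : ℤ) ^ (m + 2 - 2) := h
  refine ⟨h', ?_⟩
  rw [h']
  refine mul_ne_zero (pow_ne_zero _ (by norm_num)) (pow_ne_zero _ ?_)
  exact_mod_cast hp.ne_zero
end
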